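/- Let A = ℚ[t₁, t₂, t₃] ⊗ Λ(v₁,…,v₅) with deg v₁ = deg v₂ = deg v₃ = 3 and deg v₄ = deg v₅ = 7, and let D be the unique derivation of degree +1 on A with D t_i = 0 for all i, D v₁ = D v₂ = 0, D v₃ = t₃², D v₄ = v₁v₂t₂ + t₂⁴ and D v₅ = t₁⁴. Then D ∘ D = 0 and dim_ℚ H(A, D) < ∞. -/

import Mathlib

/-! Write `R = ℚ[t₁, t₂, t₃]` and `A` for the whole algebra.

`D ∘ D = 0`: since `D` is an odd derivation, `D ∘ D` is an ordinary derivation, so it vanishes once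
it vanishes on the generators (`D_comp_D_eq_zero`), where it is a direct computation.

Finiteness: the `tᵢ` are cycles, so `D` is `R`-linear and `ker D` is an `R`-submodule of `A`, which
is a finitely generated `R`-module. As `R` is Noetherian, `ker D` is finitely generated. Hence it
suffices that each `tᵢ` acts nilpotently on cohomology (`finite_cohomology`). If `a` is a cycle,
then `D (vⱼ a) = D vⱼ · a`, so `D v₃ = t₃²`, `D v₅ = t₁⁴` and `D v₄ = w + t₂⁴`, with `w = v₁v₂t₂`,
act as zero on cohomology. Finally `w` is a cycle with `w² = 0`, so
`t₂⁸ = (t₂⁴ + w)(t₂⁴ - w)` also acts as zero. -/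

/- D v₃ = t₃², D v₄ = v₁v₂t₂ + t₂⁴, D v₅ = t₁⁴ on ℚ[t₁,t₂,t₃] ⊗ Λ(v₁,…,v₅), deg v = (3,3,3,7,7). -/

open scoped TensorProduct

set_option synthInstance.maxHeartbeats 1000000
set_option maxHeartbeats 1000000

noncomputable section

/-- The free graded-commutative ℚ-algebra `ℚ[t₁,…,t_r] ⊗ Λ(v₁,…,v_n)`:
the tensor product of a polynomial algebra on `r` generators of degree 2 with
an exterior algebra on `n` generators of odd degrees. -/
abbrev FGCA (r n : ℕ) : Type :=
  MvPolynomial (Fin r) ℚ ⊗[ℚ] ExteriorAlgebra ℚ (Fin n → ℚ)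

/-- The degree-2 polynomial generators `tᵢ`. -/
def tg (r n : ℕ) (i : Fin r) : FGCA r n := (MvPolynomial.X i) ⊗ₜ 1

/-- The odd-degree exterior generators `vⱼ`. -/
def vg (r n : ℕ) (j : Fin n) : FGCA r n :=
  1 ⊗ₜ (ExteriorAlgebra.ι ℚ (Pi.single j (1 : ℚ)))

/-- The monomial `t^α · v_S` (with the exterior factors multiplied in increasing
order of index).  These monomials form a ℚ-basis of `FGCA r n`. -/
def gmon (r n : ℕ) (α : Fin r →₀ ℕ) (S : Finset (Fin n)) : FGCA r n :=
  (MvPolynomial.monomial α (1 : ℚ)) ⊗ₜ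
    ((S.sort (· ≤ ·)).map fun j => ExteriorAlgebra.ι ℚ (Pi.single j (1 : ℚ))).prod

/-- The (cohomological) degree of the monomial `t^α · v_S`, where each `tᵢ` has
degree `2` and each `vⱼ` has degree `dv j`. -/
def gdeg (r n : ℕ) (dv : Fin n → ℕ) (α : Fin r →₀ ℕ) (S : Finset (Fin n)) : ℕ :=
  (α.sum fun _ k => 2 * k) + S.sum dv

/-- The homogeneous part of degree `k` of `FGCA r n`: the span of the monomials
of degree `k`. -/
def homog (r n : ℕ) (dv : Fin n → ℕ) (k : ℕ) : Submodule ℚ (FGCA r n) :=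
  Submodule.span ℚ { a | ∃ α S, gdeg r n dv α S = k ∧ a = gmon r n α S }

/-- The graded Leibniz rule for a degree `+1` derivation `D`:
`D(ab) = D(a)·b + (−1)^(deg a) a·D(b)` for homogeneous `a`. -/
def IsLeibniz (r n : ℕ) (dv : Fin n → ℕ) (D : FGCA r n →ₗ[ℚ] FGCA r n) : Prop :=
  ∀ (p : ℕ) (a b : FGCA r n), a ∈ homog r n dv p →
    D (a * b) = D a * b + ((-1 : ℚ) ^ p) • (a * D b)

/-- `D` raises (cohomological) degree by `1`. -/
def RaisesDegByOne (r n : ℕ) (dv : Fin n → ℕ) (D : FGCA r n →ₗ[ℚ] FGCA r n) : Prop :=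
  ∀ (k : ℕ), ∀ a ∈ homog r n dv k, D a ∈ homog r n dv (k + 1)

/-- The cohomology `H(A, D) = ker D / im D` as a ℚ-vector space, realized as the
image of `ker D` in `A ⧸ im D`. -/
abbrev Cohomology (r n : ℕ) (D : FGCA r n →ₗ[ℚ] FGCA r n) : Type :=
  (LinearMap.ker D).map (LinearMap.range D).mkQ

end

noncomputable section

local notation "dv" => (![3, 3, 3, 7, 7] : Fin 5 → ℕ)
local notation "t₁" => tg 3 5 0
local notation "t₂" => tg 3 5 1
local notation "t₃" => tg 3 5 2
local notation "v₁" => vg 3 5 0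
local notation "v₂" => vg 3 5 1
local notation "v₃" => vg 3 5 2
local notation "v₄" => vg 3 5 3
local notation "v₅" => vg 3 5 4

/-! ### Algebraic preliminaries -/

instance finite_exteriorAlgebra (n : ℕ) : Module.Finite ℚ (ExteriorAlgebra ℚ (Fin n → ℚ)) :=
  Module.Finite.of_basis (Pi.basisFun ℚ (Fin n)).ExteriorAlgebra

/-- The inclusion of the polynomial ring as the left tensor factor. -/
abbrev pol (r n : ℕ) (p : MvPolynomial (Fin r) ℚ) : FGCA r n := p ⊗ₜ 1

lemma pol_mul (r n : ℕ) (p q : MvPolynomial (Fin r) ℚ) :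
    pol r n (p * q) = pol r n p * pol r n q := by
  simp [pol]

lemma pol_add (r n : ℕ) (p q : MvPolynomial (Fin r) ℚ) :
    pol r n (p + q) = pol r n p + pol r n q := TensorProduct.add_tmul _ _ _

lemma pol_C (r n : ℕ) (c : ℚ) : pol r n (MvPolynomial.C c) = c • (1 : FGCA r n) := by
  rw [Algebra.TensorProduct.one_def, TensorProduct.smul_tmul', ← MvPolynomial.algebraMap_eq,
    Algebra.algebraMap_eq_smul_one]

lemma smul_eq_pol_mul (r n : ℕ) (p : MvPolynomial (Fin r) ℚ) (a : FGCA r n) :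
    p • a = pol r n p * a := by
  induction a using TensorProduct.induction_on with
  | zero => simp
  | tmul q e => simp [TensorProduct.smul_tmul']
  | add x y hx hy => rw [mul_add, smul_add, hx, hy]

/-- `mul_neg` for `FGCA`, in a form usable by `rw`: its additive and ring structures agree only
up to unfolding. -/
lemma fgca_mul_neg (r n : ℕ) (a b : FGCA r n) : a * -b = -(a * b) := mul_neg a b

lemma tg_pow (r n : ℕ) (i : Fin r) (m : ℕ) :
    tg r n i ^ m = pol r n (MvPolynomial.X i ^ m) := by
  simp [tg, pol, Algebra.TensorProduct.tmul_pow]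

lemma tg_comm (r n : ℕ) (i : Fin r) (a : FGCA r n) : tg r n i * a = a * tg r n i := by
  induction a using TensorProduct.induction_on with
  | zero => simp
  | tmul p e => simp [tg, mul_comm]
  | add x y hx hy => rw [mul_add, add_mul, hx, hy]

lemma vg_sq (r n : ℕ) (j : Fin n) : vg r n j * vg r n j = 0 := by
  simp [vg]

lemma vg_swap (r n : ℕ) (i j : Fin n) : vg r n i * vg r n j = -(vg r n j * vg r n i) := by
  rw [eq_neg_iff_add_eq_zero]
  simp only [vg, Algebra.TensorProduct.tmul_mul_tmul, ← TensorProduct.tmul_add,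
    ExteriorAlgebra.ι_add_mul_swap, TensorProduct.tmul_zero]

/-- The generators `tᵢ`, `vⱼ` generate `FGCA r n` as an algebra, in the form of an induction
principle. -/
lemma fgca_induction (r n : ℕ) {C : FGCA r n → Prop} (one : C 1)
    (t : ∀ i, C (tg r n i)) (v : ∀ j, C (vg r n j))
    (mul : ∀ a b, C a → C b → C (a * b)) (add : ∀ a b, C a → C b → C (a + b))
    (smul : ∀ (c : ℚ) a, C a → C (c • a)) (a : FGCA r n) : C a := by
  have zero : C 0 := by simpa using smul 0 1 one
  have hp : ∀ p : MvPolynomial (Fin r) ℚ, C (pol r n p) := by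
    intro p
    induction p using MvPolynomial.induction_on with
    | C c => rw [pol_C]; exact smul _ _ one
    | add p q hp hq => rw [pol_add]; exact add _ _ hp hq
    | mul_X p i hp => rw [pol_mul]; exact mul _ _ hp (t i)
  have hv : ∀ x : Fin n → ℚ, C (1 ⊗ₜ ExteriorAlgebra.ι ℚ x) := by
    intro x
    rw [pi_eq_sum_univ' x, map_sum, TensorProduct.tmul_sum]
    refine Finset.sum_induction _ C add zero fun j _ => ?_
    rw [map_smul, TensorProduct.tmul_smul]
    refine smul _ _ ?_
    convert v j using 1
    unfold vg
    congr 3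
  have he : ∀ e : ExteriorAlgebra ℚ (Fin n → ℚ), C (1 ⊗ₜ e) := by
    intro e
    induction e using ExteriorAlgebra.induction with
    | algebraMap c =>
      rw [Algebra.algebraMap_eq_smul_one, TensorProduct.tmul_smul]
      exact smul _ _ one
    | ι x => exact hv x
    | mul a b ha hb =>
      have := mul _ _ ha hb
      rwa [Algebra.TensorProduct.tmul_mul_tmul, one_mul] at this
    | add a b ha hb => rw [TensorProduct.tmul_add]; exact add _ _ ha hb
  induction a using TensorProduct.induction_on with
  | zero => exact zero
  | tmul p e =>
    have := mul _ _ (hp p) (he e)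
    rwa [Algebra.TensorProduct.tmul_mul_tmul, one_mul, mul_one] at this
  | add x y hx hy => exact add _ _ hx hy

lemma one_mem_homog (r n : ℕ) (d : Fin n → ℕ) : (1 : FGCA r n) ∈ homog r n d 0 :=
  Submodule.subset_span ⟨0, ∅, by simp [gdeg], by simp [gmon, Algebra.TensorProduct.one_def]⟩

lemma tg_mem_homog (r n : ℕ) (d : Fin n → ℕ) (i : Fin r) : tg r n i ∈ homog r n d 2 :=
  Submodule.subset_span ⟨Finsupp.single i 1, ∅, by simp [gdeg], by
    simp [gmon, tg, MvPolynomial.X]⟩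

lemma vg_mem_homog (r n : ℕ) (d : Fin n → ℕ) (j : Fin n) : vg r n j ∈ homog r n d (d j) :=
  Submodule.subset_span ⟨0, {j}, by simp [gdeg], by simp [gmon, vg]⟩

/-! ### Consequences of the Leibniz rule -/

section
variable {r n : ℕ} {d : Fin n → ℕ} {D : FGCA r n →ₗ[ℚ] FGCA r n}

lemma D_one (hL : IsLeibniz r n d D) : D 1 = 0 := by
  have h := hL 0 1 1 (one_mem_homog r n d)
  simpa using h

lemma D_tg_mul (hL : IsLeibniz r n d D) {i : Fin r} (h0 : D (tg r n i) = 0) (a : FGCA r n) :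
    D (tg r n i * a) = tg r n i * D a := by
  rw [hL 2 _ a (tg_mem_homog r n d i), h0]
  simp

lemma D_vg_mul (hL : IsLeibniz r n d D) {j : Fin n} (hj : Odd (d j)) (a : FGCA r n) :
    D (vg r n j * a) = D (vg r n j) * a - vg r n j * D a := by
  rw [hL _ _ a (vg_mem_homog r n d j), hj.neg_one_pow]
  module

/-- `D` is linear over the polynomial ring, since the `tᵢ` are cycles of even degree. -/
lemma D_pol_mul (hL : IsLeibniz r n d D) (ht : ∀ i, D (tg r n i) = 0)
    (p : MvPolynomial (Fin r) ℚ) (a : FGCA r n) : D (pol r n p * a) = pol r n p * D a := by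
  induction p using MvPolynomial.induction_on generalizing a with
  | C c => simp [pol_C]
  | add p q hp hq => rw [pol_add, add_mul, map_add, hp, hq, add_mul]
  | mul_X p i hp =>
    rw [pol_mul, mul_assoc, hp, mul_assoc]
    exact congrArg _ (D_tg_mul hL (ht i) a)

/-- `D ∘ D` satisfies the ungraded Leibniz rule (the mixed terms cancel), so it vanishes as soon as
it vanishes on the generators. -/
lemma D_comp_D_eq_zero (hL : IsLeibniz r n d D) (hdeg : RaisesDegByOne r n d D)
    (ht : ∀ i, D (tg r n i) = 0) (hv : ∀ j, D (D (vg r n j)) = 0) : D ∘ₗ D = 0 := by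
  have key : ∀ (p : ℕ) (a b : FGCA r n), a ∈ homog r n d p → D (D a) = 0 →
      D (D (a * b)) = a * D (D b) := by
    intro p a b ha h0
    rw [hL p a b ha, map_add, map_smul, hL p a _ ha, hL (p + 1) _ b (hdeg p a ha), h0,
      smul_add, smul_smul, ← mul_pow, pow_succ, neg_one_mul, neg_neg, one_pow, one_smul, zero_mul,
      zero_add]
    module
  -- The elements `a` for which `D ∘ D` commutes with left multiplication by `a` form a subalgebra.
  have all : ∀ a b : FGCA r n, D (D (a * b)) = a * D (D b) := by
    intro a
    induction a using fgca_induction with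
    | one => simp
    | t i => exact fun b => key 2 _ b (tg_mem_homog r n d i) (by rw [ht i, map_zero])
    | v j => exact fun b => key _ _ b (vg_mem_homog r n d j) (hv j)
    | mul x y hx hy => intro b; rw [mul_assoc, hx, hy, mul_assoc]
    | add x y hx hy => intro b; rw [add_mul, map_add, map_add, hx, hy, add_mul]
    | smul c x hx => intro b; rw [smul_mul_assoc, map_smul, map_smul, hx, smul_mul_assoc]
  refine LinearMap.ext fun a => ?_
  have h := all a 1
  rwa [mul_one, D_one hL, map_zero, mul_zero] at h

/-- If each `tᵢ` acts nilpotently on cohomology, then cohomology is finite-dimensional: `ker D` is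
a finitely generated module over the polynomial ring, and modulo `im D` only the monomials with
bounded exponents are needed to span it from a set of module generators. -/
lemma finite_cohomology (hL : IsLeibniz r n d D) (ht : ∀ i, D (tg r n i) = 0) (N : Fin r → ℕ)
    (hN : ∀ i, ∀ a, D a = 0 → tg r n i ^ N i * a ∈ LinearMap.range D) :
    FiniteDimensional ℚ (Cohomology r n D) := by
  have hpol := D_pol_mul hL ht
  let K : Submodule (MvPolynomial (Fin r) ℚ) (FGCA r n) :=
    { carrier := {a | D a = 0}
      add_mem' := fun {a b} ha hb => by
        simp only [Set.mem_ofPred_eq] at ha hb ⊢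
        rw [map_add, ha, hb, add_zero]
      zero_mem' := map_zero D
      smul_mem' := fun p a ha => by
        simp only [Set.mem_ofPred_eq] at ha ⊢
        rw [smul_eq_pol_mul, hpol, ha, mul_zero] }
  obtain ⟨s, hs⟩ : K.FG := IsNoetherian.noetherian K
  have hsK : ∀ g ∈ s, D g = 0 := fun g hg => by
    have : g ∈ K := hs ▸ Submodule.subset_span hg
    exact this
  let box : Set (Fin r →₀ ℕ) := {α | ∀ i, α i ≤ N i}
  have hbox : box.Finite := by
    refine (Set.finite_Iic (Finsupp.equivFunOnFinite.symm N)).subset fun α hα i => ?_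
    exact hα i
  let T : Set (FGCA r n) :=
    Set.image2 (fun α g => pol r n (MvPolynomial.monomial α 1) * g) box s
  have hT : T.Finite := hbox.image2 _ s.finite_toSet
  let W : Submodule ℚ (FGCA r n) := Submodule.span ℚ T
  have hmon : ∀ g ∈ s, ∀ (α : Fin r →₀ ℕ),
      pol r n (MvPolynomial.monomial α 1) * g ∈ W ⊔ LinearMap.range D := by
    intro g hg α
    by_cases hα : α ∈ box
    · exact Submodule.mem_sup_left (Submodule.subset_span ⟨α, hα, g, hg, rfl⟩)
    · refine Submodule.mem_sup_right ?_
      simp only [box, Set.mem_ofPred_eq, not_forall, not_le] at hα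
      obtain ⟨i, hi⟩ := hα
      obtain ⟨y, hy⟩ := hN i g (hsK g hg)
      have hle : Finsupp.single i (N i) ≤ α := by
        rw [Finsupp.single_le_iff]; exact hi.le
      refine ⟨pol r n (MvPolynomial.monomial (α - Finsupp.single i (N i)) 1) * y, ?_⟩
      rw [hpol, hy, tg_pow, ← mul_assoc, ← pol_mul, MvPolynomial.X_pow_eq_monomial,
        MvPolynomial.monomial_mul, tsub_add_cancel_of_le hle, one_mul]
  have hgen : ∀ g ∈ s, ∀ p : MvPolynomial (Fin r) ℚ,
      pol r n p * g ∈ W ⊔ LinearMap.range D := by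
    intro g hg p
    induction p using MvPolynomial.induction_on' with
    | monomial α c =>
      have : MvPolynomial.monomial α c = c • MvPolynomial.monomial α (1 : ℚ) := by
        simp [MvPolynomial.smul_monomial]
      rw [pol, this, ← TensorProduct.smul_tmul', smul_mul_assoc]
      exact Submodule.smul_mem _ _ (hmon g hg α)
    | add p q hp hq => rw [pol_add, add_mul]; exact Submodule.add_mem _ hp hq
  have hker : LinearMap.ker D ≤ W ⊔ LinearMap.range D := by
    intro z hz
    have hzK : z ∈ Submodule.span (MvPolynomial (Fin r) ℚ) (s : Set (FGCA r n)) := by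
      rw [hs]; exact hz
    have hall : ∀ p : MvPolynomial (Fin r) ℚ, pol r n p * z ∈ W ⊔ LinearMap.range D := by
      clear hz
      induction hzK using Submodule.span_induction with
      | mem g hg => exact hgen g hg
      | zero => intro p; rw [mul_zero]; exact Submodule.zero_mem _
      | add x y _ _ hx hy => intro p; rw [mul_add]; exact Submodule.add_mem _ (hx p) (hy p)
      | smul q x _ hx =>
        intro p
        rw [smul_eq_pol_mul, ← mul_assoc, ← pol_mul]
        exact hx _
    have h1 := hall 1
    rwa [pol, ← Algebra.TensorProduct.one_def, one_mul] at h1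
  have hle : (LinearMap.ker D).map (LinearMap.range D).mkQ ≤ W.map (LinearMap.range D).mkQ := by
    refine (Submodule.map_mono hker).trans ?_
    rw [Submodule.map_sup, Submodule.mkQ_map_self, sup_bot_eq]
  have hWfin : FiniteDimensional ℚ W := FiniteDimensional.span_of_finite ℚ hT
  have : FiniteDimensional ℚ (W.map (LinearMap.range D).mkQ) := inferInstance
  exact Submodule.finiteDimensional_of_le hle

end

/-! ### The algebra of the theorem -/

theorem stmt_10 (D : FGCA 3 5 →ₗ[ℚ] FGCA 3 5)
    (hLeib : IsLeibniz 3 5 dv D)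
    (hdeg : RaisesDegByOne 3 5 dv D)
    (hD0 : D t₁ = (0 : FGCA 3 5))
    (hD1 : D t₂ = (0 : FGCA 3 5))
    (hD2 : D t₃ = (0 : FGCA 3 5))
    (hD3 : D v₁ = (0 : FGCA 3 5))
    (hD4 : D v₂ = (0 : FGCA 3 5))
    (hD5 : D v₃ = t₃ ^ 2)
    (hD6 : D v₄ = v₁ * v₂ * t₂ + t₂ ^ 4)
    (hD7 : D v₅ = t₁ ^ 4)
    : D ∘ₗ D = 0 ∧ FiniteDimensional ℚ (Cohomology 3 5 D) := by
  have ht : ∀ i, D (tg 3 5 i) = 0 := by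
    intro i; fin_cases i <;> assumption
  have hodd : ∀ j, Odd (dv j) := by decide
  have hpow : ∀ i m (a : FGCA 3 5), D (tg 3 5 i ^ m * a) = tg 3 5 i ^ m * D a := by
    intro i m a
    rw [tg_pow]; exact D_pol_mul hLeib ht _ a
  have hpow0 : ∀ i m, D (tg 3 5 i ^ m) = 0 := by
    intro i m
    simpa [D_one hLeib] using hpow i m 1
  -- Multiplication by `w = v₁v₂t₂` preserves cycles, and `w² = 0`.
  have hw : ∀ a, D (v₁ * v₂ * t₂ * a) = v₁ * v₂ * t₂ * D a := by
    intro a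
    rw [mul_assoc, mul_assoc, D_vg_mul hLeib (hodd 0), D_vg_mul hLeib (hodd 1),
      D_tg_mul hLeib hD1, hD3, hD4]
    rw [zero_mul, zero_mul, zero_sub, zero_sub, fgca_mul_neg, neg_neg]
    simp only [mul_assoc]
  have hww : v₁ * v₂ * t₂ * (v₁ * v₂ * t₂) = (0 : FGCA 3 5) := by
    calc v₁ * v₂ * t₂ * (v₁ * v₂ * t₂) = v₁ * (v₂ * v₁) * v₂ * t₂ * t₂ := by
          rw [mul_assoc (v₁ * v₂), tg_comm]; simp only [mul_assoc]
      _ = 0 := by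
          rw [vg_swap 3 5 1 0, fgca_mul_neg, ← mul_assoc, vg_sq, zero_mul]; simp
  have hDv : ∀ j a, D a = 0 → D (vg 3 5 j * a) = D (vg 3 5 j) * a := by
    intro j a ha
    rw [D_vg_mul hLeib (hodd j), ha, mul_zero, sub_zero]
  refine ⟨D_comp_D_eq_zero hLeib hdeg ht ?_, finite_cohomology hLeib ht ![4, 8, 2] ?_⟩
  · intro j
    fin_cases j
    · change D (D v₁) = 0
      rw [hD3, map_zero]
    · change D (D v₂) = 0
      rw [hD4, map_zero]
    · change D (D v₃) = 0
      rw [hD5, hpow0]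
    · change D (D v₄) = 0
      have := hw 1
      rw [mul_one, D_one hLeib, mul_zero] at this
      rw [hD6, map_add, this, hpow0, add_zero]
    · change D (D v₅) = 0
      rw [hD7, hpow0]
  · intro i a ha
    fin_cases i
    · change t₁ ^ 4 * a ∈ LinearMap.range D
      exact ⟨v₅ * a, by rw [hDv _ _ ha, hD7]⟩
    · change t₂ ^ 8 * a ∈ LinearMap.range D
      -- `t₂⁸ - w² = (t₂⁴ + w)(t₂⁴ - w)`, and `t₂⁴ + w = D v₄` kills cohomology.
      refine ⟨v₄ * ((t₂ ^ 4 - v₁ * v₂ * t₂) * a), ?_⟩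
      have hc : D ((t₂ ^ 4 - v₁ * v₂ * t₂) * a) = 0 := by
        rw [sub_mul, map_sub, hpow, hw, ha, mul_zero, mul_zero, sub_zero]
      have hcomm : t₂ ^ 4 * (v₁ * v₂ * t₂) = v₁ * v₂ * t₂ * (t₂ ^ 4 : FGCA 3 5) :=
        (Commute.pow_left (tg_comm 3 5 1 _) 4)
      rw [hDv _ _ hc, hD6, ← mul_assoc]
      congr 1
      rw [add_mul, mul_sub, mul_sub, hww, hcomm, ← pow_add]
      abel
    · change t₃ ^ 2 * a ∈ LinearMap.range D
      exact ⟨v₃ * a, by rw [hDv _ _ ha, hD5]⟩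

end
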